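/- Mutual information is monotone under one-sided local channels: for any bipartite density matrix ρ_{AB} and any quantum channel Λ: B → B', the state ρ' = (id_A ⊗ Λ)[ρ_{AB}] satisfies I(A:B')_{ρ'} ≤ I(A:B)_ρ; moreover this monotonicity is equivalent to the non-negativity of conditional mutual information (strong subadditivity), via the isometric (Stinespring) dilation ρ_{AB'E} = (1_A ⊗ V) ρ_{AB} (1_A ⊗ V)†: one has I(A:B)_ρ = I(A:B'E)_{ρ_{AB'E}} and I(A:B'E) − I(A:B') = I(A:E|B') ≥ 0. -/

import Mathlib

open Matrix Kronecker ComplexOrder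

section Defs
variable {α α' β β' γ : Type*} [Fintype α] [DecidableEq α] [Fintype α'] [DecidableEq α']
  [Fintype β] [DecidableEq β] [Fintype β'] [DecidableEq β'] [Fintype γ] [DecidableEq γ]

/-- A density matrix: a positive semidefinite matrix with unit trace. -/
def IsDensityMatrix (ρ : Matrix β β ℂ) : Prop := ρ.PosSemidef ∧ ρ.trace = 1

/-- The map `id_α ⊗ Λ` induced on matrices over the product index type. -/
noncomputable def idTensor (Λ : Matrix β β ℂ →ₗ[ℂ] Matrix β' β' ℂ) :
    Matrix (α × β) (α × β) ℂ →ₗ[ℂ] Matrix (α × β') (α × β') ℂ where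
  toFun M := Matrix.of fun p q => Λ (Matrix.of fun b b' => M (p.1, b) (q.1, b')) p.2 q.2
  map_add' M N := by
    ext p q
    show Λ (Matrix.of fun b b' => (M + N) (p.1, b) (q.1, b')) p.2 q.2 = _
    have h : (Matrix.of fun b b' => (M + N) (p.1, b) (q.1, b')) =
        (Matrix.of fun b b' => M (p.1, b) (q.1, b')) +
          (Matrix.of fun b b' => N (p.1, b) (q.1, b')) := rfl
    rw [h, map_add]
    rfl
  map_smul' c M := by
    ext p q
    show Λ (Matrix.of fun b b' => (c • M) (p.1, b) (q.1, b')) p.2 q.2 = _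
    have h : (Matrix.of fun b b' => (c • M) (p.1, b) (q.1, b')) =
        c • (Matrix.of fun b b' => M (p.1, b) (q.1, b')) := rfl
    rw [h, _root_.map_smul]
    rfl

/-- Complete positivity: all extensions `id ⊗ Λ` preserve positive semidefiniteness. -/
def IsCompletelyPositive (Λ : Matrix β β ℂ →ₗ[ℂ] Matrix β' β' ℂ) : Prop :=
  ∀ (k : ℕ) (M : Matrix (Fin k × β) (Fin k × β) ℂ), M.PosSemidef → (idTensor Λ M).PosSemidef

/-- A quantum channel: a completely positive trace-preserving linear map. -/
def IsQuantumChannel (Λ : Matrix β β ℂ →ₗ[ℂ] Matrix β' β' ℂ) : Prop :=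
  IsCompletelyPositive Λ ∧ ∀ X, (Λ X).trace = X.trace

/-- Partial trace over the second tensor factor. -/
noncomputable def ptraceRight (M : Matrix (α × β) (α × β) ℂ) : Matrix α α ℂ :=
  Matrix.of fun a a' => ∑ b, M (a, b) (a', b)

/-- Partial trace over the first tensor factor. -/
noncomputable def ptraceLeft (M : Matrix (α × β) (α × β) ℂ) : Matrix β β ℂ :=
  Matrix.of fun b b' => ∑ a, M (a, b) (a, b')

/-- The von Neumann entropy `S(ρ) = -Tr(ρ log₂ ρ)`, computed via the eigenvalues
(with the convention `0 log 0 = 0`; junk value `0` for non-Hermitian input). -/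
noncomputable def vnEntropy (ρ : Matrix β β ℂ) : ℝ :=
  if h : ρ.IsHermitian then -∑ i, h.eigenvalues i * Real.logb 2 (h.eigenvalues i) else 0

/-- The mutual information `I(A:B) = S(A) + S(B) - S(AB)` of a bipartite state. -/
noncomputable def mutualInfo (ρ : Matrix (α × β) (α × β) ℂ) : ℝ :=
  vnEntropy (ptraceRight ρ) + vnEntropy (ptraceLeft ρ) - vnEntropy ρ

/-- Partial trace over the third tensor factor of a tripartite system. -/
noncomputable def ptraceThird (M : Matrix (α × β × γ) (α × β × γ) ℂ) :
    Matrix (α × β) (α × β) ℂ :=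
  Matrix.of fun p q => ∑ c, M (p.1, p.2, c) (q.1, q.2, c)

/-- Partial trace over the second tensor factor of a tripartite system. -/
noncomputable def ptraceSecond (M : Matrix (α × β × γ) (α × β × γ) ℂ) :
    Matrix (α × γ) (α × γ) ℂ :=
  Matrix.of fun p q => ∑ b, M (p.1, b, p.2) (q.1, b, q.2)

end Defs

/-!
Write `χ_t(ρ, σ) = ⟨ρ, (L_σ + t R_ρ)⁻¹ ρ⟩`, with `L_σ X = σX` and `R_ρ X = Xρ`. The relative
entropy `D(ρ‖σ)` is the integral of `χ_t(ρ, σ)` over `t ≥ 0`, once the divergent term `tr ρ * log t`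
is removed. Each `χ_t` is the maximum over `X` of the functional
`2 Re tr(Xᴴρ) - tr(XXᴴσ) - t tr(XᴴXρ)`, and the unital `*`-homomorphism `X ↦ X ⊗ 1` dual to a
partial trace carries the functional of the reduced pair to that of the original pair; hence `D`
decreases under partial traces.

Strong subadditivity is this monotonicity for `D(ρ_{ABC}‖1 ⊗ ρ_{BC})` when `C` is traced out. An
isometry acting on `B` changes none of the entropies in the mutual information, so a channel acts on
it as a partial trace over the environment of its dilation, and the loss is `I(A:E|B') ≥ 0`.
-/

section FunctionalCalculus

variable {m n : Type*} [Fintype m] [DecidableEq m] [Fintype n] [DecidableEq n] {A : Matrix n n ℂ}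

theorem trace_cfc (hA : A.IsHermitian) (f : ℝ → ℝ) :
    (cfc f A).trace = ((∑ i, f (hA.eigenvalues i) : ℝ) : ℂ) := by
  rw [hA.cfc_eq, IsHermitian.cfc, Unitary.conjStarAlgAut_apply, trace_mul_cycle,
    Unitary.coe_star_mul_self, one_mul, trace_diagonal]
  simp

theorem mul_cfc_eq_cfc (hA : A.IsHermitian) (f : ℝ → ℝ) :
    A * cfc f A = cfc (fun x => x * f x) A := by
  rw [cfc_mul (fun x => x) f A continuousOn_id (A.finite_real_spectrum.continuousOn f),
    cfc_id' ℝ A hA.isSelfAdjoint]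

theorem cfc_add_smul_one (hA : A.IsHermitian) (f : ℝ → ℝ) (δ : ℝ) :
    cfc f (A + δ • 1) = cfc (fun x => f (x + δ)) A := by
  have hshift : cfc (fun x => x + δ) A = A + δ • 1 := by
    rw [cfc_add_const δ (fun x => x) A continuousOn_id hA.isSelfAdjoint,
      cfc_id' ℝ A hA.isSelfAdjoint, Algebra.algebraMap_eq_smul_one]
  rw [cfc_comp' f (fun x => x + δ) A ((A.finite_real_spectrum.image _).continuousOn f)
    (by fun_prop) hA.isSelfAdjoint, hshift]

theorem starAlgHom_map_cfc (φ : Matrix n n ℂ →⋆ₐ[ℂ] Matrix m m ℂ) (hA : A.IsHermitian)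
    (f : ℝ → ℝ) : φ (cfc f A) = cfc f (φ A) :=
  φ.map_cfc f A (A.finite_real_spectrum.continuousOn f)
    φ.toAlgHom.toLinearMap.continuous_of_finiteDimensional hA (hA.isSelfAdjoint.map φ)

end FunctionalCalculus

section DoubleOperatorSum

variable {n : Type*} [Fintype n] [DecidableEq n] {A B : Matrix n n ℂ}

/-- The squared overlaps `|⟨wⱼ, uᵢ⟩|²` between the eigenbases `u` of `A` and `w` of `B`. -/
noncomputable def eigenbasisOverlap (hA : A.IsHermitian) (hB : B.IsHermitian) (i j : n) : ℝ :=
  Complex.normSq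
    ((star (hB.eigenvectorUnitary : Matrix n n ℂ) * (hA.eigenvectorUnitary : Matrix n n ℂ)) j i)

/-- The finite-dimensional double operator integral `∑ᵢⱼ c i j • |wⱼ⟩⟨wⱼ| |uᵢ⟩⟨uᵢ|`, where `u` and
`w` are the eigenbases of `A` and `B`. -/
noncomputable def doubleOperatorSum (hA : A.IsHermitian) (hB : B.IsHermitian) (c : n → n → ℝ) :
    Matrix n n ℂ :=
  hB.eigenvectorUnitary *
    ((star (hB.eigenvectorUnitary : Matrix n n ℂ) * (hA.eigenvectorUnitary : Matrix n n ℂ)) ⊙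
      of fun j i => (c i j : ℂ)) *
    star (hA.eigenvectorUnitary : Matrix n n ℂ)

variable (hA : A.IsHermitian) (hB : B.IsHermitian)

theorem doubleOperatorSum_one : doubleOperatorSum hA hB (fun _ _ => 1) = 1 := by
  have h (M : Matrix n n ℂ) : M ⊙ of (fun _ _ => ((1 : ℝ) : ℂ)) = M := by ext; simp
  rw [doubleOperatorSum, h, ← mul_assoc, Unitary.mul_star_self_of_mem hB.eigenvectorUnitary.2,
    one_mul, Unitary.mul_star_self_of_mem hA.eigenvectorUnitary.2]

theorem doubleOperatorSum_add (c d : n → n → ℝ) :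
    doubleOperatorSum hA hB (c + d) = doubleOperatorSum hA hB c + doubleOperatorSum hA hB d := by
  simp only [doubleOperatorSum, ← add_mul, ← mul_add, ← hadamard_add]
  congr 3
  ext j i
  simp

theorem doubleOperatorSum_smul (t : ℝ) (c : n → n → ℝ) :
    doubleOperatorSum hA hB (t • c) = t • doubleOperatorSum hA hB c := by
  have h : (of fun j i => ((t • c) i j : ℂ)) = t • of fun j i => (c i j : ℂ) := by ext; simp
  rw [doubleOperatorSum, h, hadamard_smul, mul_smul_comm, smul_mul_assoc, doubleOperatorSum]

theorem doubleOperatorSum_mul_cfc (c : n → n → ℝ) (f : ℝ → ℝ) :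
    doubleOperatorSum hA hB c * cfc f A =
      doubleOperatorSum hA hB fun i j => c i j * f (hA.eigenvalues i) := by
  rw [hA.cfc_eq, IsHermitian.cfc, Unitary.conjStarAlgAut_apply, doubleOperatorSum, mul_assoc,
    mul_assoc (hA.eigenvectorUnitary : Matrix n n ℂ), ← mul_assoc (star _),
    Unitary.coe_star_mul_self, one_mul, ← mul_assoc, mul_assoc _ (_ ⊙ _), doubleOperatorSum]
  congr 2
  ext j i
  simp [mul_diagonal, mul_assoc]

theorem cfc_mul_doubleOperatorSum (c : n → n → ℝ) (f : ℝ → ℝ) :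
    cfc f B * doubleOperatorSum hA hB c =
      doubleOperatorSum hA hB fun i j => f (hB.eigenvalues j) * c i j := by
  rw [hB.cfc_eq, IsHermitian.cfc, Unitary.conjStarAlgAut_apply, doubleOperatorSum, ← mul_assoc,
    ← mul_assoc, mul_assoc _ (star _), Unitary.coe_star_mul_self, mul_one, mul_assoc _ _ (_ ⊙ _),
    doubleOperatorSum]
  congr 2
  ext j i
  simp [diagonal_mul, mul_left_comm]

theorem cfc_left_eq_doubleOperatorSum (f : ℝ → ℝ) :
    cfc f A = doubleOperatorSum hA hB fun i _ => f (hA.eigenvalues i) := by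
  simpa [doubleOperatorSum_one] using doubleOperatorSum_mul_cfc hA hB (fun _ _ => 1) f

theorem cfc_right_eq_doubleOperatorSum (f : ℝ → ℝ) :
    cfc f B = doubleOperatorSum hA hB fun _ j => f (hB.eigenvalues j) := by
  simpa [doubleOperatorSum_one] using cfc_mul_doubleOperatorSum hA hB (fun _ _ => 1) f

theorem trace_conjTranspose_doubleOperatorSum_mul (c d : n → n → ℝ) :
    ((doubleOperatorSum hA hB c)ᴴ * doubleOperatorSum hA hB d).trace =
      ((∑ i, ∑ j, eigenbasisOverlap hA hB i j * (c i j * d i j) : ℝ) : ℂ) := by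
  have hU : (hA.eigenvectorUnitary : Matrix n n ℂ)ᴴ * hA.eigenvectorUnitary = 1 :=
    Unitary.coe_star_mul_self _
  have hW : (hB.eigenvectorUnitary : Matrix n n ℂ)ᴴ * hB.eigenvectorUnitary = 1 :=
    Unitary.coe_star_mul_self _
  simp only [doubleOperatorSum, star_eq_conjTranspose, conjTranspose_mul,
    conjTranspose_conjTranspose, mul_assoc]
  rw [← mul_assoc (_ᴴ) (hB.eigenvectorUnitary : Matrix n n ℂ), hW, one_mul, trace_mul_comm]
  simp only [mul_assoc]
  rw [hU, mul_one, trace]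
  simp only [diag_apply, mul_apply (M := (_ ⊙ _)ᴴ), conjTranspose_apply, hadamard_apply, of_apply]
  push_cast
  refine Finset.sum_congr rfl fun i _ => Finset.sum_congr rfl fun j _ => ?_
  rw [eigenbasisOverlap, Complex.normSq_eq_conj_mul_self, star_mul', star_eq_conjTranspose]
  simp
  ring

theorem trace_cfc_mul_cfc (f g : ℝ → ℝ) :
    (cfc f A * cfc g B).trace = ((∑ i, ∑ j, eigenbasisOverlap hA hB i j *
      (f (hA.eigenvalues i) * g (hB.eigenvalues j)) : ℝ) : ℂ) := by
  have hstar : (cfc f A)ᴴ = cfc f A := (cfc_predicate f A : IsSelfAdjoint _)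
  rw [← trace_conjTranspose_doubleOperatorSum_mul, ← cfc_left_eq_doubleOperatorSum,
    ← cfc_right_eq_doubleOperatorSum, hstar]

end DoubleOperatorSum

section ChiDivergence

variable {m n : Type*} [Fintype m] [Fintype n]
  {ρ σ : Matrix n n ℂ} {ρ' σ' : Matrix m m ℂ} {t : ℝ}

/-- The concave functional `X ↦ 2 Re tr(Xᴴρ) - tr(XXᴴσ) - t tr(XᴴXρ)`, whose maximum is
`chiDivergence`. -/
noncomputable def chiFunctional (t : ℝ) (ρ σ X : Matrix n n ℂ) : ℝ :=
  2 * (Xᴴ * ρ).trace.re - (X * Xᴴ * σ).trace.re - t * (Xᴴ * X * ρ).trace.re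

/-- Completing the square around a solution `X₀` of the Sylvester equation. -/
theorem chiFunctional_eq_sub (hρ : ρ.IsHermitian) (hσ : σ.IsHermitian) {X₀ : Matrix n n ℂ}
    (hX₀ : σ * X₀ + t • (X₀ * ρ) = ρ) (X : Matrix n n ℂ) :
    chiFunctional t ρ σ X = (X₀ᴴ * ρ).trace.re
      - (((X - X₀)ᴴ * σ * (X - X₀)).trace.re + t * ((X - X₀) * ρ * (X - X₀)ᴴ).trace.re) := by
  have hρX (Y : Matrix n n ℂ) :
      (Yᴴ * ρ).trace.re = (Yᴴ * σ * X₀).trace.re + t * (X₀ * ρ * Yᴴ).trace.re := by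
    conv_lhs => rw [← hX₀]
    rw [mul_add, trace_add, mul_smul_comm, trace_smul, trace_mul_comm Yᴴ (X₀ * ρ), ← mul_assoc]
    simp
  have hsymm {τ : Matrix n n ℂ} (hτ : τ.IsHermitian) (Y Z : Matrix n n ℂ) :
      (Yᴴ * τ * Z).trace.re = (Zᴴ * τ * Y).trace.re := by
    have h : (Yᴴ * τ * Z)ᴴ = Zᴴ * τ * Y := by simp [hτ.eq, mul_assoc]
    rw [← h, trace_conjTranspose]
    rfl
  have h₁ : (X * Xᴴ * σ).trace = (Xᴴ * σ * X).trace := by rw [trace_mul_cycle, trace_mul_cycle]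
  have h₂ : (Xᴴ * X * ρ).trace = (X * ρ * Xᴴ).trace := by rw [trace_mul_cycle, trace_mul_cycle]
  have h₃ : (X * ρ * X₀ᴴ).trace.re = (X₀ * ρ * Xᴴ).trace.re := by
    simpa using hsymm hρ Xᴴ X₀ᴴ
  rw [chiFunctional, h₁, h₂, hρX X, hρX X₀]
  simp only [conjTranspose_sub, sub_mul, mul_sub, trace_sub, Complex.sub_re, hsymm hσ X₀ X, h₃]
  ring

variable [DecidableEq m] [DecidableEq n]

/-- The `χ²`-type divergence `⟨ρ, (L_σ + t R_ρ)⁻¹ ρ⟩`, where `L_σ X = σX` and `R_ρ X = Xρ`, written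
in the eigenbases of `ρ` and `σ`. -/
noncomputable def chiDivergence (hρ : ρ.IsHermitian) (hσ : σ.IsHermitian) (t : ℝ) : ℝ :=
  ∑ i, ∑ j, eigenbasisOverlap hρ hσ i j *
    (hρ.eigenvalues i ^ 2 / (hσ.eigenvalues j + t * hρ.eigenvalues i))

theorem exists_sylvester_solution (hρ : ρ.IsHermitian) (hσ : σ.IsHermitian)
    (h : ∀ i j, hσ.eigenvalues j + t * hρ.eigenvalues i ≠ 0) :
    ∃ X₀, σ * X₀ + t • (X₀ * ρ) = ρ ∧ (X₀ᴴ * ρ).trace.re = chiDivergence hρ hσ t := by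
  have hρ_eq := cfc_left_eq_doubleOperatorSum hρ hσ fun x => x
  rw [cfc_id' ℝ ρ hρ.isSelfAdjoint] at hρ_eq
  let c : n → n → ℝ := fun i j => hρ.eigenvalues i / (hσ.eigenvalues j + t * hρ.eigenvalues i)
  have hσX := cfc_mul_doubleOperatorSum hρ hσ c fun x => x
  have hXρ := doubleOperatorSum_mul_cfc hρ hσ c fun x => x
  rw [cfc_id' ℝ σ hσ.isSelfAdjoint] at hσX
  rw [cfc_id' ℝ ρ hρ.isSelfAdjoint] at hXρ
  refine ⟨doubleOperatorSum hρ hσ c, ?_, ?_⟩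
  · rw [hσX, hXρ, ← doubleOperatorSum_smul, ← doubleOperatorSum_add]
    refine Eq.trans (congrArg _ ?_) hρ_eq.symm
    ext i j
    calc hσ.eigenvalues j * c i j + t * (c i j * hρ.eigenvalues i)
        = c i j * (hσ.eigenvalues j + t * hρ.eigenvalues i) := by ring
      _ = hρ.eigenvalues i := div_mul_cancel₀ _ (h i j)
  · have htr := trace_conjTranspose_doubleOperatorSum_mul hρ hσ c fun i _ => hρ.eigenvalues i
    rw [← hρ_eq] at htr
    simp only [htr, Complex.ofReal_re, chiDivergence, c, div_mul_eq_mul_div, ← sq]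

theorem isGreatest_chiDivergence (hρ : ρ.PosSemidef) (hσ : σ.PosDef) (ht : 0 ≤ t) :
    IsGreatest (Set.range (chiFunctional t ρ σ)) (chiDivergence hρ.1 hσ.1 t) := by
  obtain ⟨X₀, hX₀, hval⟩ := exists_sylvester_solution hρ.1 hσ.1 (t := t) fun i j =>
    (add_pos_of_pos_of_nonneg (hσ.eigenvalues_pos j)
      (mul_nonneg ht (hρ.eigenvalues_nonneg i))).ne'
  have hsq := chiFunctional_eq_sub hρ.1 hσ.1 hX₀
  rw [hval] at hsq
  refine ⟨⟨X₀, by simp [hsq]⟩, ?_⟩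
  rintro _ ⟨X, rfl⟩
  have h₁ : 0 ≤ ((X - X₀)ᴴ * σ * (X - X₀)).trace.re :=
    (Complex.le_def.mp (hσ.posSemidef.conjTranspose_mul_mul_same (X - X₀)).trace_nonneg).1
  have h₂ : 0 ≤ ((X - X₀) * ρ * (X - X₀)ᴴ).trace.re :=
    (Complex.le_def.mp (hρ.mul_mul_conjTranspose_same (X - X₀)).trace_nonneg).1
  rw [hsq]
  linarith [mul_nonneg ht h₂]

theorem chiDivergence_mono (φ : Matrix m m ℂ →⋆ₐ[ℂ] Matrix n n ℂ)
    (hρ : ρ.PosSemidef) (hσ : σ.PosDef) (hρ' : ρ'.PosSemidef) (hσ' : σ'.PosDef)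
    (hφρ : ∀ X, (φ X * ρ).trace = (X * ρ').trace) (hφσ : ∀ X, (φ X * σ).trace = (X * σ').trace)
    (ht : 0 ≤ t) : chiDivergence hρ'.1 hσ'.1 t ≤ chiDivergence hρ.1 hσ.1 t := by
  obtain ⟨X, hX⟩ := (isGreatest_chiDivergence hρ' hσ' ht).1
  have hφ : chiFunctional t ρ σ (φ X) = chiFunctional t ρ' σ' X := by
    simp only [chiFunctional, ← hφρ, ← hφσ, map_mul, ← star_eq_conjTranspose, map_star]
  rw [← hX, ← hφ]
  exact (isGreatest_chiDivergence hρ hσ ht).2 ⟨φ X, rfl⟩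

end ChiDivergence

section RelEntropy

open Filter Topology

theorem hasDerivAt_mul_log_add_mul {a b t : ℝ} (h : b + t * a ≠ 0) :
    HasDerivAt (fun s => a * (Real.log (b + s * a) - Real.log b)) (a ^ 2 / (b + t * a)) t := by
  have hlin : HasDerivAt (fun s : ℝ => b + s * a) a t := by
    simpa using ((hasDerivAt_id t).mul_const a).const_add b
  exact (((hlin.log h).sub_const (Real.log b)).const_mul a).congr_deriv (by ring)

theorem tendsto_mul_log_add_mul_sub_log (a b : ℝ) :
    Tendsto (fun t => a * (Real.log (b + t * a) - Real.log b) - a * Real.log t) atTop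
      (𝓝 (a * (Real.log a - Real.log b))) := by
  rcases eq_or_ne a 0 with rfl | ha
  · simp
  have hlim : Tendsto (fun t : ℝ => b * t⁻¹ + a) atTop (𝓝 a) := by
    simpa using (tendsto_inv_atTop_zero.const_mul b).add_const a
  refine (((hlim.log ha).sub_const (Real.log b)).const_mul a).congr' ?_
  filter_upwards [eventually_gt_atTop 0, hlim.eventually_ne ha] with t ht hne
  have hfactor : b + t * a = t * (b * t⁻¹ + a) := by field_simp
  rw [hfactor, Real.log_mul ht.ne' hne]
  ring

variable {m n : Type*} [Fintype m] [DecidableEq m] [Fintype n] [DecidableEq n]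
  {ρ σ : Matrix n n ℂ} {ρ' σ' : Matrix m m ℂ}

/-- The relative entropy `D(ρ‖σ) = tr ρ (log ρ - log σ)`, in nats. -/
noncomputable def relEntropy (ρ σ : Matrix n n ℂ) : ℝ :=
  (ρ * (cfc Real.log ρ - cfc Real.log σ)).trace.re

/-- The integral of `chiDivergence` over `[0, t]`, in closed form; `relEntropy` is its limit as
`t → ∞` after the divergent term `tr ρ * log t` is removed. -/
noncomputable def truncRelEntropy (hρ : ρ.IsHermitian) (hσ : σ.IsHermitian) (t : ℝ) : ℝ :=
  ∑ i, ∑ j, eigenbasisOverlap hρ hσ i j * (hρ.eigenvalues i *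
    (Real.log (hσ.eigenvalues j + t * hρ.eigenvalues i) - Real.log (hσ.eigenvalues j)))

theorem truncRelEntropy_zero (hρ : ρ.IsHermitian) (hσ : σ.IsHermitian) :
    truncRelEntropy hρ hσ 0 = 0 := by
  simp [truncRelEntropy]

theorem hasDerivAt_truncRelEntropy (hρ : ρ.PosSemidef) (hσ : σ.PosDef) {t : ℝ} (ht : 0 ≤ t) :
    HasDerivAt (truncRelEntropy hρ.1 hσ.1) (chiDivergence hρ.1 hσ.1 t) t :=
  HasDerivAt.fun_sum fun i _ => HasDerivAt.fun_sum fun j _ =>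
    (hasDerivAt_mul_log_add_mul (add_pos_of_pos_of_nonneg (hσ.eigenvalues_pos j)
      (mul_nonneg ht (hρ.eigenvalues_nonneg i))).ne').const_mul _

theorem relEntropy_eq_sum (hρ : ρ.IsHermitian) (hσ : σ.IsHermitian) :
    relEntropy ρ σ = ∑ i, ∑ j, eigenbasisOverlap hρ hσ i j *
      (hρ.eigenvalues i * (Real.log (hρ.eigenvalues i) - Real.log (hσ.eigenvalues j))) := by
  have hρρ := trace_cfc_mul_cfc hρ hσ (fun x => x * Real.log x) (fun _ => (1 : ℝ))
  have hρσ := trace_cfc_mul_cfc hρ hσ (fun x => x) Real.log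
  rw [cfc_const_one ℝ σ hσ.isSelfAdjoint, mul_one, ← mul_cfc_eq_cfc hρ] at hρρ
  rw [cfc_id' ℝ ρ hρ.isSelfAdjoint] at hρσ
  simp only [relEntropy, mul_sub, trace_sub, hρρ, hρσ, Complex.sub_re, Complex.ofReal_re,
    Finset.sum_sub_distrib, mul_one]

theorem re_trace_eq_sum_overlap (hρ : ρ.IsHermitian) (hσ : σ.IsHermitian) :
    ρ.trace.re = ∑ i, ∑ j, eigenbasisOverlap hρ hσ i j * hρ.eigenvalues i := by
  have h := trace_cfc_mul_cfc hρ hσ (fun x => x) (fun _ => (1 : ℝ))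
  rw [cfc_id' ℝ ρ hρ.isSelfAdjoint, cfc_const_one ℝ σ hσ.isSelfAdjoint, mul_one] at h
  simp only [h, Complex.ofReal_re, mul_one]

theorem tendsto_truncRelEntropy_sub_log (hρ : ρ.IsHermitian) (hσ : σ.IsHermitian) :
    Tendsto (fun t => truncRelEntropy hρ hσ t - ρ.trace.re * Real.log t) atTop
      (𝓝 (relEntropy ρ σ)) := by
  rw [relEntropy_eq_sum hρ hσ]
  simp only [truncRelEntropy, re_trace_eq_sum_overlap hρ hσ, Finset.sum_mul,
    ← Finset.sum_sub_distrib, mul_assoc, ← mul_sub (eigenbasisOverlap hρ hσ _ _)]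
  exact tendsto_finsetSum _ fun i _ => tendsto_finsetSum _ fun j _ =>
    (tendsto_mul_log_add_mul_sub_log _ _).const_mul _

theorem truncRelEntropy_mono (φ : Matrix m m ℂ →⋆ₐ[ℂ] Matrix n n ℂ)
    (hρ : ρ.PosSemidef) (hσ : σ.PosDef) (hρ' : ρ'.PosSemidef) (hσ' : σ'.PosDef)
    (hφρ : ∀ X, (φ X * ρ).trace = (X * ρ').trace) (hφσ : ∀ X, (φ X * σ).trace = (X * σ').trace)
    {t : ℝ} (ht : 0 ≤ t) : truncRelEntropy hρ'.1 hσ'.1 t ≤ truncRelEntropy hρ.1 hσ.1 t := by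
  have hderiv {s : ℝ} (hs : 0 ≤ s) :=
    (hasDerivAt_truncRelEntropy hρ hσ hs).sub (hasDerivAt_truncRelEntropy hρ' hσ' hs)
  have hmono : MonotoneOn (truncRelEntropy hρ.1 hσ.1 - truncRelEntropy hρ'.1 hσ'.1)
      (Set.Ici 0) := by
    refine monotoneOn_of_deriv_nonneg (convex_Ici 0)
      (fun s hs => (hderiv hs).continuousAt.continuousWithinAt)
      (fun s hs => (hderiv (interior_subset hs)).differentiableAt.differentiableWithinAt) ?_
    intro s hs
    rw [(hderiv (interior_subset hs)).deriv, sub_nonneg]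
    exact chiDivergence_mono φ hρ hσ hρ' hσ' hφρ hφσ (interior_subset hs)
  have h := hmono Set.self_mem_Ici ht ht
  simpa [truncRelEntropy_zero] using h

/-- By `hφρ` and `hφσ`, the matrices `ρ'` and `σ'` are the images of `ρ` and `σ` under the channel
dual to `φ`. -/
theorem relEntropy_mono (φ : Matrix m m ℂ →⋆ₐ[ℂ] Matrix n n ℂ)
    (hρ : ρ.PosSemidef) (hσ : σ.PosDef) (hρ' : ρ'.PosSemidef) (hσ' : σ'.PosDef)
    (hφρ : ∀ X, (φ X * ρ).trace = (X * ρ').trace) (hφσ : ∀ X, (φ X * σ).trace = (X * σ').trace) :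
    relEntropy ρ' σ' ≤ relEntropy ρ σ := by
  have htrace : ρ'.trace = ρ.trace := by simpa using (hφρ 1).symm
  refine le_of_tendsto_of_tendsto (tendsto_truncRelEntropy_sub_log hρ'.1 hσ'.1)
    (tendsto_truncRelEntropy_sub_log hρ.1 hσ.1) ?_
  filter_upwards [eventually_ge_atTop 0] with t ht
  rw [htrace]
  exact sub_le_sub_right (truncRelEntropy_mono φ hρ hσ hρ' hσ' hφρ hφσ ht) _

end RelEntropy

section Entropy

open Filter Topology

variable {m n : Type*} [Fintype m] [DecidableEq m] [Fintype n] [DecidableEq n] {A : Matrix n n ℂ}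

theorem vnEntropy_eq_trace (hA : A.IsHermitian) :
    vnEntropy A = -(A * cfc Real.log A).trace.re / Real.log 2 := by
  rw [vnEntropy, dif_pos hA, mul_cfc_eq_cfc hA, trace_cfc hA, Complex.ofReal_re]
  simp only [Real.logb, mul_div_assoc', neg_div, Finset.sum_div]

theorem vnEntropy_zero : vnEntropy (0 : Matrix n n ℂ) = 0 := by
  simp [vnEntropy_eq_trace]

theorem vnEntropy_eq_roots (hA : A.IsHermitian) :
    vnEntropy A = -(A.charpoly.roots.map fun z => z.re * Real.logb 2 z.re).sum := by
  rw [vnEntropy, dif_pos hA, hA.roots_charpoly_eq_eigenvalues, Multiset.map_map]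
  rfl

/-- The matrices `V * A * Vᴴ` and `A` have the same nonzero eigenvalues, by
`Matrix.charpoly_mul_comm'`. -/
theorem vnEntropy_isometry_conj (hA : A.IsHermitian) (V : Matrix m n ℂ) (hV : Vᴴ * V = 1) :
    vnEntropy (V * A * Vᴴ) = vnEntropy A := by
  rw [vnEntropy_eq_roots hA, vnEntropy_eq_roots (isHermitian_mul_mul_conjTranspose V hA)]
  have hroots := congrArg Polynomial.roots (charpoly_mul_comm' (V * A) Vᴴ)
  rw [← Matrix.mul_assoc, hV, Matrix.one_mul,
    Polynomial.roots_mul (mul_ne_zero (by simp) (charpoly_monic _).ne_zero),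
    Polynomial.roots_mul (mul_ne_zero (by simp) (charpoly_monic _).ne_zero)] at hroots
  have hsum := congrArg (fun s => (s.map fun z => z.re * Real.logb 2 z.re).sum) hroots
  simpa [Multiset.map_nsmul, Multiset.sum_nsmul] using hsum

theorem tendsto_mul_log_add_const (x : ℝ) :
    Tendsto (fun δ => x * Real.log (x + δ)) (𝓝 0) (𝓝 (x * Real.log x)) := by
  rcases eq_or_ne x 0 with rfl | hx
  · simp
  · have hadd : Tendsto (fun δ => x + δ) (𝓝 0) (𝓝 x) := by
      simpa using (continuous_const_add x).tendsto 0
    exact (hadd.log hx).const_mul x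

theorem tendsto_re_trace_mul_log_add_smul_one (hA : A.IsHermitian) :
    Tendsto (fun δ : ℝ => (A * cfc Real.log (A + δ • 1)).trace.re) (𝓝 0)
      (𝓝 (A * cfc Real.log A).trace.re) := by
  simp only [cfc_add_smul_one hA, mul_cfc_eq_cfc hA, trace_cfc hA, Complex.ofReal_re]
  exact tendsto_finsetSum _ fun i _ => tendsto_mul_log_add_const _

end Entropy

section PartialTrace

variable {α β γ : Type*} {M : Matrix (α × β) (α × β) ℂ} {R : Matrix (α × β × γ) (α × β × γ) ℂ}

theorem ptraceLeft_eq_sum [Fintype α] (M : Matrix (α × β) (α × β) ℂ) :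
    ptraceLeft M = ∑ a, M.submatrix (Prod.mk a) (Prod.mk a) := by
  ext b b'
  simp [ptraceLeft, Matrix.sum_apply]

theorem ptraceRight_eq_sum [Fintype β] (M : Matrix (α × β) (α × β) ℂ) :
    ptraceRight M = ∑ b, M.submatrix (·, b) (·, b) := by
  ext a a'
  simp [ptraceRight, Matrix.sum_apply]

theorem ptraceLeft_posSemidef [Fintype α] (hM : M.PosSemidef) : (ptraceLeft M).PosSemidef := by
  rw [ptraceLeft_eq_sum]
  exact posSemidef_sum _ fun a _ => hM.submatrix _

theorem ptraceRight_posSemidef [Fintype β] (hM : M.PosSemidef) : (ptraceRight M).PosSemidef := by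
  rw [ptraceRight_eq_sum]
  exact posSemidef_sum _ fun b _ => hM.submatrix _

theorem ptraceRight_posDef [Fintype β] [Nonempty β] (hM : M.PosDef) : (ptraceRight M).PosDef := by
  rw [ptraceRight_eq_sum]
  exact posDef_sum Finset.univ_nonempty fun b _ => hM.submatrix (Prod.mk_left_injective b)

theorem ptraceThird_posSemidef [Fintype γ] (hR : R.PosSemidef) : (ptraceThird R).PosSemidef :=
  ptraceRight_posSemidef (hR.submatrix (Equiv.prodAssoc α β γ))

theorem ptraceThird_posDef [Fintype γ] [Nonempty γ] (hR : R.PosDef) : (ptraceThird R).PosDef :=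
  ptraceRight_posDef (hR.submatrix (Equiv.prodAssoc α β γ).injective)

theorem ptraceRight_ptraceThird [Fintype β] [Fintype γ] (R : Matrix (α × β × γ) (α × β × γ) ℂ) :
    ptraceRight (ptraceThird R) = ptraceRight R := by
  ext a a'
  simp only [ptraceThird, ptraceRight, of_apply, Fintype.sum_prod_type]

theorem ptraceLeft_ptraceThird [Fintype α] [Fintype γ] (R : Matrix (α × β × γ) (α × β × γ) ℂ) :
    ptraceLeft (ptraceThird R) = ptraceRight (ptraceLeft R) := by
  ext b b'
  exact Finset.sum_comm

theorem ptraceRight_add_smul_one [DecidableEq α] [Fintype β] [DecidableEq β]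
    (M : Matrix (α × β) (α × β) ℂ) (δ : ℝ) :
    ptraceRight (M + δ • 1) = ptraceRight M + (Fintype.card β * δ) • 1 := by
  ext a a'
  rcases eq_or_ne a a' with rfl | h <;> simp [ptraceRight, Finset.sum_add_distrib, *]

theorem ptraceThird_one_kronecker [DecidableEq α] [Fintype γ] (N : Matrix (β × γ) (β × γ) ℂ) :
    ptraceThird ((1 : Matrix α α ℂ) ⊗ₖ N) = 1 ⊗ₖ ptraceRight N := by
  ext p q
  simp [ptraceThird, ptraceRight, Finset.mul_sum]

end PartialTrace

section ObservableEmbeddings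

variable {α β m n : Type*} [Fintype α] [Fintype β] [Fintype m] [DecidableEq m] [Fintype n]
  [DecidableEq n]

theorem trace_mul_one_kronecker [DecidableEq α] (M : Matrix (α × β) (α × β) ℂ)
    (Y : Matrix β β ℂ) : (M * (1 ⊗ₖ Y)).trace = (ptraceLeft M * Y).trace := by
  simp only [trace, diag_apply, mul_apply, ptraceLeft, of_apply, Fintype.sum_prod_type,
    kroneckerMap_apply, one_apply, ite_mul, mul_ite, one_mul, zero_mul, mul_zero,
    Finset.sum_mul]
  rw [Finset.sum_comm]
  refine Finset.sum_congr rfl fun b _ => ?_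
  rw [Finset.sum_comm (γ := β)]
  refine Finset.sum_congr rfl fun a _ => ?_
  rw [Finset.sum_comm]
  exact Finset.sum_congr rfl fun b' _ => by simp

theorem trace_kronecker_one_mul [DecidableEq β] (X : Matrix α α ℂ)
    (M : Matrix (α × β) (α × β) ℂ) : ((X ⊗ₖ 1) * M).trace = (X * ptraceRight M).trace := by
  simp only [trace, diag_apply, mul_apply, ptraceRight, of_apply, Fintype.sum_prod_type,
    kroneckerMap_apply, one_apply, ite_mul, mul_ite, mul_one, zero_mul, mul_zero,
    Finset.mul_sum]
  refine Finset.sum_congr rfl fun a _ => ?_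
  rw [Finset.sum_comm]
  exact Finset.sum_congr rfl fun a' _ => Finset.sum_congr rfl fun b _ => by simp

variable [DecidableEq α] [DecidableEq β]

variable (α β) in
/-- The embedding `X ↦ X ⊗ 1` of observables, dual to the partial trace `ptraceRight`. -/
noncomputable def kroneckerOneHom : Matrix α α ℂ →⋆ₐ[ℂ] Matrix (α × β) (α × β) ℂ where
  toAlgHom := AlgHom.ofLinearMap ((kroneckerBilinear (R := ℂ)).flip 1) one_kronecker_one
    fun X Y => show (X * Y) ⊗ₖ 1 = X ⊗ₖ 1 * Y ⊗ₖ 1 by rw [← mul_kronecker_mul, one_mul]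
  map_star' X := show Xᴴ ⊗ₖ 1 = (X ⊗ₖ 1)ᴴ by rw [conjTranspose_kronecker, conjTranspose_one]

variable (α β) in
/-- The embedding `Y ↦ 1 ⊗ Y` of observables, dual to the partial trace `ptraceLeft`. -/
noncomputable def oneKroneckerHom : Matrix β β ℂ →⋆ₐ[ℂ] Matrix (α × β) (α × β) ℂ where
  toAlgHom := AlgHom.ofLinearMap (kroneckerBilinear (R := ℂ) 1) one_kronecker_one
    fun X Y => show 1 ⊗ₖ (X * Y) = 1 ⊗ₖ X * 1 ⊗ₖ Y by rw [← mul_kronecker_mul, one_mul]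
  map_star' Y := show 1 ⊗ₖ Yᴴ = (1 ⊗ₖ Y)ᴴ by rw [conjTranspose_kronecker, conjTranspose_one]

/-- The relabelling of a matrix algebra along a bijection of index types. -/
noncomputable def reindexStarAlgHom (e : m ≃ n) : Matrix m m ℂ →⋆ₐ[ℂ] Matrix n n ℂ where
  toAlgHom := (reindexAlgEquiv ℂ ℂ e : Matrix m m ℂ →ₐ[ℂ] Matrix n n ℂ)
  map_star' X := show reindex e e Xᴴ = (reindex e e X)ᴴ from (conjTranspose_reindex e e X).symm

theorem trace_reindexStarAlgHom_mul (e : m ≃ n) (X : Matrix m m ℂ) (M : Matrix n n ℂ) :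
    (reindexStarAlgHom e X * M).trace = (X * M.submatrix e e).trace := by
  have hM : reindexStarAlgHom e (M.submatrix e e) = M := (reindex e e).apply_symm_apply M
  conv_lhs => rw [← hM, ← map_mul]
  exact e.symm.sum_comp fun i => (X * M.submatrix e e) i i

end ObservableEmbeddings

section StrongSubadditivity

open Filter Topology

variable {α β γ : Type*} [Fintype α] [DecidableEq α] [Fintype β] [DecidableEq β] [Fintype γ]
  [DecidableEq γ] {R : Matrix (α × β × γ) (α × β × γ) ℂ}

/-- The conditional mutual information `I(A:C|B) = S(AB) + S(BC) - S(ABC) - S(B)`. -/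
noncomputable def condMutualInfo (R : Matrix (α × β × γ) (α × β × γ) ℂ) : ℝ :=
  vnEntropy (ptraceThird R) + vnEntropy (ptraceLeft R) - vnEntropy R -
    vnEntropy (ptraceRight (ptraceLeft R))

theorem mutualInfo_sub_mutualInfo_ptraceThird (R : Matrix (α × β × γ) (α × β × γ) ℂ) :
    mutualInfo R - mutualInfo (ptraceThird R) = condMutualInfo R := by
  rw [mutualInfo, mutualInfo, ptraceRight_ptraceThird, ptraceLeft_ptraceThird, condMutualInfo]
  ring

theorem relEntropy_ptraceThird_le [Nonempty γ] {T : Matrix (α × β × γ) (α × β × γ) ℂ}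
    (hR : R.PosSemidef) (hT : T.PosDef) :
    relEntropy (ptraceThird R) (ptraceThird T) ≤ relEntropy R T := by
  let φ := (reindexStarAlgHom (Equiv.prodAssoc α β γ)).comp (kroneckerOneHom (α × β) γ)
  have hφ (T : Matrix (α × β × γ) (α × β × γ) ℂ) (X : Matrix (α × β) (α × β) ℂ) :
      (φ X * T).trace = (X * ptraceThird T).trace :=
    (trace_reindexStarAlgHom_mul _ _ T).trans (trace_kronecker_one_mul X _)
  exact relEntropy_mono φ hR hT (ptraceThird_posSemidef hR) (ptraceThird_posDef hT) (hφ R) (hφ T)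

theorem relEntropy_one_kronecker (M : Matrix (α × β) (α × β) ℂ) {N : Matrix β β ℂ}
    (hN : N.IsHermitian) :
    relEntropy M (1 ⊗ₖ N) =
      (M * cfc Real.log M).trace.re - (ptraceLeft M * cfc Real.log N).trace.re := by
  have hlog : cfc Real.log ((1 : Matrix α α ℂ) ⊗ₖ N) = 1 ⊗ₖ cfc Real.log N :=
    (starAlgHom_map_cfc (oneKroneckerHom α β) hN Real.log).symm
  rw [relEntropy, hlog, mul_sub, trace_sub, trace_mul_one_kronecker, Complex.sub_re]

theorem re_trace_mul_log_ptraceThird_sub_le [Nonempty γ] (hR : R.PosSemidef)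
    {N : Matrix (β × γ) (β × γ) ℂ} (hN : N.PosDef) :
    (ptraceThird R * cfc Real.log (ptraceThird R)).trace.re -
        (ptraceRight (ptraceLeft R) * cfc Real.log (ptraceRight N)).trace.re ≤
      (R * cfc Real.log R).trace.re - (ptraceLeft R * cfc Real.log N).trace.re := by
  have h := relEntropy_ptraceThird_le hR (PosDef.one.kronecker hN)
  rwa [ptraceThird_one_kronecker, relEntropy_one_kronecker _ (ptraceRight_posDef hN).1,
    relEntropy_one_kronecker R hN.1, ptraceLeft_ptraceThird] at h

/-- The case `N = ptraceLeft R` of `re_trace_mul_log_ptraceThird_sub_le`, reached as the limit of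
`N = ptraceLeft R + δ • 1` because `ptraceLeft R` may be singular. -/
theorem re_trace_mul_log_strong_subadditivity [Nonempty γ] (hR : R.PosSemidef) :
    (ptraceThird R * cfc Real.log (ptraceThird R)).trace.re -
        (ptraceRight (ptraceLeft R) * cfc Real.log (ptraceRight (ptraceLeft R))).trace.re ≤
      (R * cfc Real.log R).trace.re - (ptraceLeft R * cfc Real.log (ptraceLeft R)).trace.re := by
  have hBC := ptraceLeft_posSemidef hR
  have hscale : Tendsto (fun δ : ℝ => Fintype.card γ * δ) (𝓝 0) (𝓝 0) := by
    simpa using (continuous_const_mul (Fintype.card γ : ℝ)).tendsto 0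
  have hlimB := (tendsto_re_trace_mul_log_add_smul_one (ptraceRight_posSemidef hBC).1).comp hscale
  have hlimBC := tendsto_re_trace_mul_log_add_smul_one hBC.1
  refine le_of_tendsto_of_tendsto (b := 𝓝[>] 0)
    ((hlimB.const_sub _).mono_left nhdsWithin_le_nhds)
    ((hlimBC.const_sub _).mono_left nhdsWithin_le_nhds) ?_
  filter_upwards [self_mem_nhdsWithin] with δ (hδ : 0 < δ)
  have h := re_trace_mul_log_ptraceThird_sub_le hR (PosDef.posSemidef_add hBC (PosDef.one.smul hδ))
  rwa [ptraceRight_add_smul_one] at h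

theorem condMutualInfo_nonneg (hR : R.PosSemidef) : 0 ≤ condMutualInfo R := by
  have hBC := ptraceLeft_posSemidef hR
  rw [condMutualInfo]
  rcases isEmpty_or_nonempty γ with hγ | hγ
  · have hAB : ptraceThird R = 0 := by ext; simp [ptraceThird]
    have hB : ptraceRight (ptraceLeft R) = 0 := by ext; simp [ptraceRight]
    rw [hAB, hB, Subsingleton.elim R 0, Subsingleton.elim (ptraceLeft _) 0]
    simp only [vnEntropy_zero, sub_self, add_zero, le_refl]
  · rw [vnEntropy_eq_trace (ptraceThird_posSemidef hR).1, vnEntropy_eq_trace hBC.1,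
      vnEntropy_eq_trace hR.1, vnEntropy_eq_trace (ptraceRight_posSemidef hBC).1, ← add_div,
      ← sub_div, ← sub_div]
    refine div_nonneg ?_ (Real.log_nonneg one_le_two)
    linarith [re_trace_mul_log_strong_subadditivity hR]

end StrongSubadditivity

section LocalConj

variable {α β β' ε : Type*} [Fintype α] [DecidableEq α] [Fintype β] {ρ : Matrix (α × β) (α × β) ℂ}

/-- The conjugation `(1 ⊗ V) ρ (1 ⊗ V)ᴴ` of a bipartite matrix by `V` acting on the second system.
If `V` is a Stinespring isometry of a channel, this is the dilated state `ρ_{AB'E}`. -/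
noncomputable def localConj (V : Matrix β' β ℂ) (ρ : Matrix (α × β) (α × β) ℂ) :
    Matrix (α × β') (α × β') ℂ :=
  ((1 : Matrix α α ℂ) ⊗ₖ V) * ρ * ((1 : Matrix α α ℂ) ⊗ₖ V)ᴴ

theorem localConj_apply (V : Matrix β' β ℂ) (ρ : Matrix (α × β) (α × β) ℂ) (p q : α × β') :
    localConj V ρ p q = (V * (of fun b b' => ρ (p.1, b) (q.1, b')) * Vᴴ) p.2 q.2 := by
  simp [localConj, mul_apply, Fintype.sum_prod_type, one_apply, apply_ite]

theorem ptraceLeft_localConj (V : Matrix β' β ℂ) (ρ : Matrix (α × β) (α × β) ℂ) :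
    ptraceLeft (localConj V ρ) = V * ptraceLeft ρ * Vᴴ := by
  rw [ptraceLeft_eq_sum ρ, Matrix.mul_sum, Matrix.sum_mul]
  ext b b'
  simp only [ptraceLeft, of_apply, localConj_apply, Matrix.sum_apply]
  rfl

theorem idTensor_eq_ptraceThird_localConj [Fintype ε] {Λ : Matrix β β ℂ →ₗ[ℂ] Matrix β' β' ℂ}
    {V : Matrix (β' × ε) β ℂ} (hdil : ∀ X, Λ X = ptraceRight (V * X * Vᴴ))
    (ρ : Matrix (α × β) (α × β) ℂ) : idTensor Λ ρ = ptraceThird (localConj V ρ) := by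
  ext p q
  simp only [ptraceThird, of_apply, localConj_apply]
  exact congrFun₂ (hdil _) p.2 q.2

theorem localConj_posSemidef [Finite β'] (V : Matrix β' β ℂ) (hρ : ρ.PosSemidef) :
    (localConj V ρ).PosSemidef :=
  hρ.mul_mul_conjTranspose_same _

variable [Fintype β'] [DecidableEq β] {V : Matrix β' β ℂ}

theorem ptraceRight_localConj (hV : Vᴴ * V = 1) (ρ : Matrix (α × β) (α × β) ℂ) :
    ptraceRight (localConj V ρ) = ptraceRight ρ := by
  ext a a'
  have h := trace_mul_comm (V * of fun b b' => ρ (a, b) (a', b')) Vᴴ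
  rw [← Matrix.mul_assoc, hV, Matrix.one_mul] at h
  simp only [ptraceRight, of_apply, localConj_apply]
  exact h

theorem mutualInfo_localConj [DecidableEq β'] (hρ : ρ.PosSemidef) (hV : Vᴴ * V = 1) :
    mutualInfo (localConj V ρ) = mutualInfo ρ := by
  have hVV : ((1 : Matrix α α ℂ) ⊗ₖ V)ᴴ * ((1 : Matrix α α ℂ) ⊗ₖ V) = 1 := by
    rw [conjTranspose_kronecker, ← mul_kronecker_mul, hV, conjTranspose_one, one_mul,
      one_kronecker_one]
  rw [mutualInfo, mutualInfo, ptraceRight_localConj hV, ptraceLeft_localConj, localConj,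
    vnEntropy_isometry_conj hρ.1 _ hVV,
    vnEntropy_isometry_conj (ptraceLeft_posSemidef hρ).1 _ hV]

end LocalConj

theorem mutualInfo_monotone_oneSided_general {α β β' ε : Type*} [Fintype α] [DecidableEq α]
    [Fintype β] [DecidableEq β] [Fintype β'] [DecidableEq β'] [Fintype ε] [DecidableEq ε]
    {ρ : Matrix (α × β) (α × β) ℂ} (hρ : ρ.PosSemidef)
    {Λ : Matrix β β ℂ →ₗ[ℂ] Matrix β' β' ℂ} {V : Matrix (β' × ε) β ℂ} (hV : Vᴴ * V = 1)
    (hdil : ∀ X : Matrix β β ℂ, Λ X = ptraceRight (V * X * Vᴴ)) :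
    mutualInfo (idTensor Λ ρ) ≤ mutualInfo ρ ∧
      mutualInfo ρ = mutualInfo (localConj V ρ) ∧
      mutualInfo (localConj V ρ) - mutualInfo (ptraceThird (localConj V ρ)) =
        condMutualInfo (localConj V ρ) ∧
      0 ≤ condMutualInfo (localConj V ρ) := by
  have hdilated := (mutualInfo_localConj hρ hV).symm
  have hchain := mutualInfo_sub_mutualInfo_ptraceThird (localConj V ρ)
  have hssa : 0 ≤ condMutualInfo (localConj V ρ) :=
    condMutualInfo_nonneg (localConj_posSemidef V hρ)
  refine ⟨?_, hdilated, hchain, hssa⟩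
  rw [idTensor_eq_ptraceThird_localConj hdil, hdilated]
  linarith

/-- **Monotonicity of mutual information under one-sided local channels**, and its
equivalence with strong subadditivity via the Stinespring dilation
`ρ_{AB'E} = (𝟙 ⊗ V) ρ_{AB} (𝟙 ⊗ V)ᴴ`: one has `I(A:B')_{ρ'} ≤ I(A:B)_ρ`,
`I(A:B)_ρ = I(A:B'E)`, and `I(A:B'E) - I(A:B') = I(A:E|B') ≥ 0`. -/
theorem mutualInfo_monotone_oneSided {α β β' ε : Type*} [Fintype α] [DecidableEq α]
    [Fintype β] [DecidableEq β] [Fintype β'] [DecidableEq β'] [Fintype ε] [DecidableEq ε]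
    (ρ : Matrix (α × β) (α × β) ℂ) (hρ : IsDensityMatrix ρ)
    (Λ : Matrix β β ℂ →ₗ[ℂ] Matrix β' β' ℂ) (hΛ : IsQuantumChannel Λ)
    (V : Matrix (β' × ε) β ℂ) (hV : Vᴴ * V = 1)
    (hdil : ∀ X : Matrix β β ℂ, Λ X = ptraceRight (V * X * Vᴴ)) :
    mutualInfo (idTensor Λ ρ) ≤ mutualInfo ρ ∧
      mutualInfo ρ =
        mutualInfo (((1 : Matrix α α ℂ) ⊗ₖ V) * ρ * ((1 : Matrix α α ℂ) ⊗ₖ V)ᴴ) ∧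
      mutualInfo (((1 : Matrix α α ℂ) ⊗ₖ V) * ρ * ((1 : Matrix α α ℂ) ⊗ₖ V)ᴴ) -
          mutualInfo (ptraceThird (((1 : Matrix α α ℂ) ⊗ₖ V) * ρ *
            ((1 : Matrix α α ℂ) ⊗ₖ V)ᴴ)) =
        vnEntropy (ptraceThird (((1 : Matrix α α ℂ) ⊗ₖ V) * ρ *
            ((1 : Matrix α α ℂ) ⊗ₖ V)ᴴ)) +
          vnEntropy (ptraceLeft (((1 : Matrix α α ℂ) ⊗ₖ V) * ρ *
            ((1 : Matrix α α ℂ) ⊗ₖ V)ᴴ)) -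
          vnEntropy (((1 : Matrix α α ℂ) ⊗ₖ V) * ρ * ((1 : Matrix α α ℂ) ⊗ₖ V)ᴴ) -
          vnEntropy (ptraceRight (ptraceLeft (((1 : Matrix α α ℂ) ⊗ₖ V) * ρ *
            ((1 : Matrix α α ℂ) ⊗ₖ V)ᴴ))) ∧
      0 ≤ vnEntropy (ptraceThird (((1 : Matrix α α ℂ) ⊗ₖ V) * ρ *
            ((1 : Matrix α α ℂ) ⊗ₖ V)ᴴ)) +
          vnEntropy (ptraceLeft (((1 : Matrix α α ℂ) ⊗ₖ V) * ρ *
            ((1 : Matrix α α ℂ) ⊗ₖ V)ᴴ)) -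
          vnEntropy (((1 : Matrix α α ℂ) ⊗ₖ V) * ρ * ((1 : Matrix α α ℂ) ⊗ₖ V)ᴴ) -
          vnEntropy (ptraceRight (ptraceLeft (((1 : Matrix α α ℂ) ⊗ₖ V) * ρ *
            ((1 : Matrix α α ℂ) ⊗ₖ V)ᴴ))) :=
  mutualInfo_monotone_oneSided_general hρ.1 hV hdil
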